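/- Let Δ = ⟨F_1,…,F_r⟩ ∪ ⟨G_1,…,G_s⟩ be a Cohen-Macaulay simplicial forest, fix i ∈ [r] such that F_i ∩ G_j ≠ ∅ for some j, and let A ⊆ ⋂_{j : F_i∩G_j ≠ ∅} (F_i ∩ G_j). Then the contraction Δ_A is again a Cohen-Macaulay simplicial forest; in particular, R/I(Δ_A) is Cohen-Macaulay and Δ_A is a grafted simplicial forest. -/

import Mathlib

open MvPolynomial

/-- A simplicial complex on the vertex set `V`, presented by its set of facets
(the maximal faces).  Every facet is nonempty and no facet contains another. -/
structure SimplicialComplexOn (V : Type) [Fintype V] [DecidableEq V] : Type where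
  facets : Finset (Finset V)
  nonempty_facet : ∀ F ∈ facets, F.Nonempty
  antichain : ∀ F ∈ facets, ∀ G ∈ facets, F ⊆ G → F = G

variable {V : Type} [Fintype V] [DecidableEq V]

/-- `F` is a leaf of the collection of facets `S`: either `F` is the only facet, or
there is a facet `G ≠ F` (a joint) with `F ∩ H ⊆ F ∩ G` for every facet `H ≠ F`. -/
def IsLeafOf (S : Finset (Finset V)) (F : Finset V) : Prop :=
  F ∈ S ∧ ((∀ H ∈ S, H = F) ∨
    ∃ G ∈ S, G ≠ F ∧ ∀ H ∈ S, H ≠ F → F ∩ H ⊆ F ∩ G)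

/-- The forest property for a facet collection: every nonempty subcollection
(i.e. every nonempty subcomplex) has a leaf. -/
def HasLeafProp (S : Finset (Finset V)) : Prop :=
  ∀ T ⊆ S, T.Nonempty → ∃ F, IsLeafOf T F

/-- A good leaf: a facet which is a leaf of every subcomplex containing it. -/
def IsGoodLeafOf (S : Finset (Finset V)) (F : Finset V) : Prop :=
  F ∈ S ∧ ∀ T ⊆ S, F ∈ T → IsLeafOf T F

/-- A special leaf: a leaf `F` such that for all facets `H, H' ≠ F`,
`H ∩ H' ≠ ∅` iff `(H ∩ H') \ F ≠ ∅`. -/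
def IsSpecialLeafOf (S : Finset (Finset V)) (F : Finset V) : Prop :=
  IsLeafOf S F ∧ ∀ H ∈ S, ∀ H' ∈ S, H ≠ F → H' ≠ F →
    ((H ∩ H').Nonempty ↔ ((H ∩ H') \ F).Nonempty)

/-- A matching: a subcollection of the facets that is pairwise disjoint. -/
def IsMatchingOf (S : Finset (Finset V)) (M : Finset (Finset V)) : Prop :=
  M ⊆ S ∧ ∀ F ∈ M, ∀ G ∈ M, F ≠ G → F ∩ G = ∅

/-- The matching number: maximum size of a matching. -/
noncomputable def matchingNumberOf (S : Finset (Finset V)) : ℕ :=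
  sSup {n | ∃ M : Finset (Finset V), IsMatchingOf S M ∧ M.card = n}

/-- The facet collection `S` is grafted: it decomposes as `Fs ∪ Gs` where
(1) every vertex of a `G ∈ Gs` lies in some `F ∈ Fs`, (2) `Fs` is exactly the set
of leaves of `S`, (3) `Fs` and `Gs` are disjoint, (4) the members of `Fs` are
pairwise disjoint, and (5) for each `G ∈ Gs`, deleting the facet `G` leaves a
grafted collection. -/
inductive IsGrafted : Finset (Finset V) → Prop where
  | intro (S Fs Gs : Finset (Finset V))
      (hunion : S = Fs ∪ Gs)
      (hdisj : Disjoint Fs Gs)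
      (hcover : ∀ G ∈ Gs, ∀ v ∈ G, ∃ F ∈ Fs, v ∈ F)
      (hleaves : ∀ F, IsLeafOf S F ↔ F ∈ Fs)
      (hFdisj : ∀ F ∈ Fs, ∀ F' ∈ Fs, F ≠ F' → F ∩ F' = ∅)
      (hrec : ∀ G ∈ Gs, IsGrafted (S.erase G)) :
      IsGrafted S

/-- `S` is the (minimal presentation of the) grafting of the collection `Gs`
with the simplices `Fs`. -/
def IsGraftingDecomp (S Fs Gs : Finset (Finset V)) : Prop :=
  S = Fs ∪ Gs ∧ Disjoint Fs Gs ∧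
  (∀ G ∈ Gs, ∀ v ∈ G, ∃ F ∈ Fs, v ∈ F) ∧
  (∀ F, IsLeafOf S F ↔ F ∈ Fs) ∧
  (∀ F ∈ Fs, ∀ F' ∈ Fs, F ≠ F' → F ∩ F' = ∅) ∧
  (∀ G ∈ Gs, IsGrafted (S.erase G))

/-- A Cohen-Macaulay simplicial forest, combinatorially: a grafted simplicial forest. -/
def IsCMForestFacets (S : Finset (Finset V)) : Prop :=
  HasLeafProp S ∧ IsGrafted S

/-- The closed neighborhood `N[F] = {F} ∪ {G ∈ S : G ≠ F, G ∩ F ≠ ∅}`. -/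
def closedNbhd (S : Finset (Finset V)) (F : Finset V) : Finset (Finset V) :=
  insert F (S.filter fun G => G ≠ F ∧ (G ∩ F).Nonempty)

/-- The contraction of the facet collection `S` on `A`: the minimal members of
`{F \ A : F ∈ S}`. -/
def contraction (S : Finset (Finset V)) (A : Finset V) : Finset (Finset V) :=
  (S.image fun F => F \ A).filter fun F' => ∀ G ∈ S, G \ A ⊆ F' → G \ A = F'

variable (K : Type) [Field K]

/-- The square-free monomial `x_S = ∏_{v ∈ S} x_v`. -/
noncomputable def xMon (S : Finset V) : MvPolynomial V K := ∏ v ∈ S, X v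

/-- The facet ideal `I(Δ) = ⟨x_F : F a facet⟩`. -/
noncomputable def facetIdealOf (S : Finset (Finset V)) : Ideal (MvPolynomial V K) :=
  Ideal.span { p | ∃ F ∈ S, p = xMon K F }

/-- The `k`-th square-free power of an ideal: the ideal generated by all
square-free monomials lying in `I ^ k`. -/
noncomputable def sqfreePow (I : Ideal (MvPolynomial V K)) (k : ℕ) :
    Ideal (MvPolynomial V K) :=
  Ideal.span { p | (∃ S : Finset V, p = xMon K S) ∧ p ∈ I ^ k }

/-- The depth of `R/I` with respect to the homogeneous maximal ideal
`m = ⟨x_v : v ∈ V⟩`: the largest length of an `R/I`-regular sequence of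
elements of `m`. -/
noncomputable def gradedDepth (I : Ideal (MvPolynomial V K)) : ℕ :=
  sSup {n | ∃ rs : List (MvPolynomial V K), rs.length = n ∧
    (∀ r ∈ rs, r ∈ Ideal.span (Set.range (X : V → MvPolynomial V K))) ∧
    RingTheory.Sequence.IsRegular (MvPolynomial V K ⧸ I) rs}

/-- `R/I` is Cohen-Macaulay: its depth equals its Krull dimension. -/
def IsCMQuot (I : Ideal (MvPolynomial V K)) : Prop :=
  ((gradedDepth K I : ℕ∞) : WithBot ℕ∞) = ringKrullDim (MvPolynomial V K ⧸ I)

/-- Concrete description of grafted collections. -/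
structure NiceGraft (S Fs : Finset (Finset V)) : Prop where
  sub : Fs ⊆ S
  nonempty : ∀ H ∈ S, H.Nonempty
  anti : ∀ H ∈ S, ∀ H' ∈ S, H ⊆ H' → H = H'
  disj : ∀ F ∈ Fs, ∀ F' ∈ Fs, F ≠ F' → F ∩ F' = ∅
  cover : ∀ H ∈ S, ∀ v ∈ H, ∃ F ∈ Fs, v ∈ F
  chain : ∀ F ∈ Fs, ∀ G ∈ S, ∀ G' ∈ S, F ∩ G ⊆ G' ∨ F ∩ G' ⊆ G

theorem leaf_erase {S Fs Gs : Finset (Finset V)}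
    (hunion : S = Fs ∪ Gs)
    (hanti : ∀ H ∈ S, ∀ H' ∈ S, H ⊆ H' → H = H')
    (hleaves : ∀ F, IsLeafOf S F ↔ F ∈ Fs)
    (hFdisj : ∀ F ∈ Fs, ∀ F' ∈ Fs, F ≠ F' → F ∩ F' = ∅)
    (hdisj : Disjoint Fs Gs)
    (G : Finset V) (hG : G ∈ Gs) (hrec : IsGrafted (S.erase G))
    (F : Finset V) (hF : F ∈ Fs) : IsLeafOf (S.erase G) F := by
  have hFG : F ≠ G := fun h => Finset.disjoint_left.1 hdisj hF (h ▸ hG)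
  have hFS : F ∈ S := by rw [hunion]; exact Finset.mem_union_left _ hF
  have hGS : G ∈ S := by rw [hunion]; exact Finset.mem_union_right _ hG
  generalize hT : S.erase G = T at hrec ⊢
  cases hrec with
  | intro _ Fs' Gs' hu' hd' hc' hl' hF' hr' =>
    have hFT : F ∈ T := by rw [← hT]; exact Finset.mem_erase.2 ⟨hFG, hFS⟩
    rw [hl']
    rw [hu'] at hFT
    rcases Finset.mem_union.1 hFT with h | h
    · exact h
    exfalso
    obtain ⟨-, h1 | ⟨J, hJ, hJF, hJ'⟩⟩ := (hleaves F).2 hF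
    · exact hFG (h1 G hGS).symm
    · apply hJF
      refine (hanti F hFS J hJ ?_).symm
      intro v hv
      obtain ⟨F1, hF1, hv1⟩ := hc' F h v hv
      have hF1S : F1 ∈ S := by
        have : F1 ∈ S.erase G := by rw [hT, hu']; exact Finset.mem_union_left _ hF1
        exact Finset.mem_of_mem_erase this
      have hne : F1 ≠ F := fun e => Finset.disjoint_left.1 hd' (e ▸ hF1) h
      exact (Finset.mem_inter.1 (hJ' F1 hF1S hne (Finset.mem_inter.2 ⟨hv, hv1⟩))).2

theorem grafted_chain {S : Finset (Finset V)} (h : IsGrafted S) :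
    (∀ H ∈ S, ∀ H' ∈ S, H ⊆ H' → H = H') →
    ∀ F, IsLeafOf S F → ∀ G ∈ S, ∀ G' ∈ S, F ∩ G ⊆ G' ∨ F ∩ G' ⊆ G := by
  induction h with
  | intro S Fs Gs hunion hdisj hcover hleaves hFdisj hrec ih =>
    intro hanti F hF G hG G' hG'
    have hFs : F ∈ Fs := (hleaves F).1 hF
    have key : ∀ G ∈ S, G ∈ Gs ∨ G = F ∨ F ∩ G = ∅ := by
      intro G hG
      rw [hunion] at hG
      rcases Finset.mem_union.1 hG with h | h
      · by_cases e : G = F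
        · exact Or.inr (Or.inl e)
        · exact Or.inr (Or.inr (hFdisj F hFs G h (Ne.symm e)))
      · exact Or.inl h
    by_cases hex : ∃ B ∈ Gs, B ≠ G ∧ B ≠ G'
    · obtain ⟨B, hB, hBG, hBG'⟩ := hex
      refine ih B hB ?_ F ?_ G ?_ G' ?_
      · intro H hH H' hH'
        exact hanti H (Finset.mem_of_mem_erase hH) H' (Finset.mem_of_mem_erase hH')
      · exact leaf_erase hunion hanti hleaves hFdisj hdisj B hB (hrec B hB) F hFs
      · exact Finset.mem_erase.2 ⟨hBG.symm, hG⟩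
      · exact Finset.mem_erase.2 ⟨hBG'.symm, hG'⟩
    · push Not at hex
      by_cases e1 : G = F
      · right; subst e1; exact Finset.inter_subset_left
      by_cases e2 : G' = F
      · left; subst e2; exact Finset.inter_subset_left
      obtain ⟨-, h1 | ⟨J, hJ, hJF, hJ'⟩⟩ := hF
      · exact absurd (h1 G hG) e1
      · rcases key J hJ with h | h | h
        · by_cases e : J = G
          · right; subst e
            exact (hJ' G' hG' e2).trans Finset.inter_subset_right
          · left
            have := hex J h e
            subst this
            exact (hJ' G hG e1).trans Finset.inter_subset_right
        · exact absurd h hJF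
        · left
          have := hJ' G hG e1
          rw [h] at this
          exact this.trans (Finset.empty_subset _)

theorem niceGraft_of_decomp {S Fs Gs : Finset (Finset V)}
    (hne : ∀ H ∈ S, H.Nonempty)
    (hanti : ∀ H ∈ S, ∀ H' ∈ S, H ⊆ H' → H = H')
    (h : IsGraftingDecomp S Fs Gs) : NiceGraft S Fs := by
  obtain ⟨hunion, hdisj, hcover, hleaves, hFdisj, hrec⟩ := h
  have hg : IsGrafted S := IsGrafted.intro S Fs Gs hunion hdisj hcover hleaves hFdisj hrec
  refine ⟨?_, hne, hanti, hFdisj, ?_, ?_⟩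
  · rw [hunion]; exact Finset.subset_union_left
  · intro H hH v hv
    rw [hunion] at hH
    rcases Finset.mem_union.1 hH with h | h
    · exact ⟨H, h, hv⟩
    · exact hcover H h v hv
  · intro F hF
    exact grafted_chain hg hanti F ((hleaves F).2 hF)

theorem NiceGraft.leaf_iff {S Fs : Finset (Finset V)} (h : NiceGraft S Fs) (F : Finset V) :
    IsLeafOf S F ↔ F ∈ Fs := by
  constructor
  · rintro ⟨hFS, h1 | ⟨J, hJ, hJF, hJ'⟩⟩
    · obtain ⟨v, hv⟩ := h.nonempty F hFS
      obtain ⟨F1, hF1, -⟩ := h.cover F hFS v hv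
      rw [← h1 F1 (h.sub hF1)]; exact hF1
    · by_contra hF
      apply hJF
      refine (h.anti F hFS J hJ ?_).symm
      intro v hv
      obtain ⟨F1, hF1, hv1⟩ := h.cover F hFS v hv
      have hne : F1 ≠ F := fun e => hF (e ▸ hF1)
      exact (Finset.mem_inter.1 (hJ' F1 (h.sub hF1) hne (Finset.mem_inter.2 ⟨hv, hv1⟩))).2
  · intro hF
    refine ⟨h.sub hF, ?_⟩
    by_cases hex : ∀ H ∈ S, H = F
    · exact Or.inl hex
    right
    push Not at hex
    obtain ⟨B, hB, hBF⟩ := hex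
    obtain ⟨J, hJ, hJmax⟩ := Finset.exists_max_image (S.erase F) (fun H => (F ∩ H).card)
      ⟨B, Finset.mem_erase.2 ⟨hBF, hB⟩⟩
    obtain ⟨hJF, hJS⟩ := Finset.mem_erase.1 hJ
    refine ⟨J, hJS, hJF, ?_⟩
    intro H hH hHF
    rcases h.chain F hF H hH J hJS with h1 | h1
    · exact Finset.subset_inter Finset.inter_subset_left h1
    · have h2 : F ∩ J ⊆ F ∩ H := Finset.subset_inter Finset.inter_subset_left h1
      rw [Finset.eq_of_subset_of_card_le h2 (hJmax H (Finset.mem_erase.2 ⟨hHF, hH⟩))]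

theorem NiceGraft.isGrafted {S Fs : Finset (Finset V)} (h : NiceGraft S Fs) : IsGrafted S := by
  induction hn : S.card generalizing S with
  | zero =>
    have hS : S = ∅ := Finset.card_eq_zero.1 hn
    subst hS
    refine IsGrafted.intro _ Fs (∅ \ Fs) ?_ Finset.disjoint_sdiff ?_ h.leaf_iff h.disj ?_
    · exact (Finset.union_sdiff_of_subset h.sub).symm
    · simp
    · simp
  | succ n ih =>
    refine IsGrafted.intro S Fs (S \ Fs) ?_ Finset.disjoint_sdiff ?_ h.leaf_iff h.disj ?_
    · exact (Finset.union_sdiff_of_subset h.sub).symm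
    · intro G hG
      exact h.cover G (Finset.mem_sdiff.1 hG).1
    · intro G hG
      obtain ⟨hGS, hGF⟩ := Finset.mem_sdiff.1 hG
      refine ih ?_ (by rw [Finset.card_erase_of_mem hGS, hn]; rfl)
      have hm : ∀ H ∈ S.erase G, H ∈ S := fun H => Finset.mem_of_mem_erase
      refine ⟨?_, fun H hH => h.nonempty H (hm H hH),
        fun H hH H' hH' => h.anti H (hm H hH) H' (hm H' hH'), h.disj,
        fun H hH => h.cover H (hm H hH),
        fun F hF G hG G' hG' => h.chain F hF G (hm G hG) G' (hm G' hG')⟩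
      intro F hF
      exact Finset.mem_erase.2 ⟨fun e => hGF (e ▸ hF), h.sub hF⟩

theorem mem_contraction {S : Finset (Finset V)} {A H : Finset V} :
    H ∈ contraction S A ↔ (∃ F ∈ S, F \ A = H) ∧ ∀ G ∈ S, G \ A ⊆ H → G \ A = H := by
  simp [contraction]

theorem exists_contraction_le {S : Finset (Finset V)} (A : Finset V) {F : Finset V}
    (hF : F ∈ S) : ∃ H ∈ contraction S A, H ⊆ F \ A := by
  obtain ⟨B, hB, hmin⟩ := Finset.exists_min_image (S.filter fun G => G \ A ⊆ F \ A)
    (fun G => (G \ A).card) ⟨F, Finset.mem_filter.2 ⟨hF, subset_rfl⟩⟩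
  obtain ⟨hBS, hBF⟩ := Finset.mem_filter.1 hB
  refine ⟨B \ A, mem_contraction.2 ⟨⟨B, hBS, rfl⟩, ?_⟩, hBF⟩
  intro G hG hGB
  exact Finset.eq_of_subset_of_card_le hGB
    (hmin G (Finset.mem_filter.2 ⟨hG, hGB.trans hBF⟩))

theorem NiceGraft.contraction {S Fs : Finset (Finset V)} (h : NiceGraft S Fs) (A : Finset V)
    (hA : ∀ H ∈ S, (H \ A).Nonempty) :
    NiceGraft (contraction S A) ((contraction S A).filter fun H => ∃ F ∈ Fs, H ⊆ F) := by
  have anti : ∀ H ∈ _root_.contraction S A, ∀ H' ∈ _root_.contraction S A, H ⊆ H' → H = H' := by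
    intro H hH H' hH' hs
    obtain ⟨⟨B, hB, rfl⟩, -⟩ := mem_contraction.1 hH
    exact (mem_contraction.1 hH').2 B hB hs
  have chain : ∀ F ∈ Fs, ∀ G ∈ _root_.contraction S A, ∀ G' ∈ _root_.contraction S A,
      F ∩ G ⊆ G' ∨ F ∩ G' ⊆ G := by
    intro F hF G hG G' hG'
    obtain ⟨⟨B, hB, rfl⟩, -⟩ := mem_contraction.1 hG
    obtain ⟨⟨B', hB', rfl⟩, -⟩ := mem_contraction.1 hG'
    rcases h.chain F hF B hB B' hB' with h1 | h1
    · left; intro v hv; have := @h1 v; simp at hv this ⊢; tauto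
    · right; intro v hv; have := @h1 v; simp at hv this ⊢; tauto
  refine ⟨Finset.filter_subset _ _, ?_, anti, ?_, ?_, ?_⟩
  · intro H hH
    obtain ⟨⟨B, hB, rfl⟩, -⟩ := mem_contraction.1 hH
    exact hA B hB
  · intro H hH H' hH' hne
    obtain ⟨hH, F, hF, hHF⟩ := Finset.mem_filter.1 hH
    obtain ⟨hH', F', hF', hHF'⟩ := Finset.mem_filter.1 hH'
    by_cases e : F = F'
    · subst e
      exfalso
      apply hne
      rcases chain F hF H hH H' hH' with h1 | h1
      · rw [Finset.inter_eq_right.2 hHF] at h1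
        exact anti H hH H' hH' h1
      · rw [Finset.inter_eq_right.2 hHF'] at h1
        exact (anti H' hH' H hH h1).symm
    · rw [← Finset.subset_empty, ← h.disj F hF F' hF' e]
      exact Finset.inter_subset_inter hHF hHF'
  · intro H hH v hv
    obtain ⟨⟨B, hB, hBH⟩, -⟩ := mem_contraction.1 hH
    have hvB : v ∈ B \ A := hBH ▸ hv
    obtain ⟨F, hF, hvF⟩ := h.cover B hB v (Finset.mem_sdiff.1 hvB).1
    obtain ⟨F', hF', hs⟩ := exists_contraction_le A (h.sub hF)
    have hs' : F' ⊆ F := hs.trans Finset.sdiff_subset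
    refine ⟨F', Finset.mem_filter.2 ⟨hF', F, hF, hs'⟩, ?_⟩
    rcases chain F hF F' hF' H hH with h1 | h1
    · rw [Finset.inter_eq_right.2 hs'] at h1
      rw [anti F' hF' H hH h1]; exact hv
    · exact h1 (Finset.mem_inter.2 ⟨hvF, hv⟩)
  · intro F hF
    obtain ⟨-, F0, hF0, hs⟩ := Finset.mem_filter.1 hF
    intro G hG G' hG'
    rcases chain F0 hF0 G hG G' hG' with h1 | h1
    · exact Or.inl ((Finset.inter_subset_inter_right hs).trans h1)
    · exact Or.inr ((Finset.inter_subset_inter_right hs).trans h1)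

theorem HasLeafProp.contraction {S : Finset (Finset V)} (h : HasLeafProp S) (A : Finset V) :
    HasLeafProp (contraction S A) := by
  intro T hT hTne
  have hlift : ∀ H : Finset V, ∃ B : Finset V, H ∈ T → B ∈ S ∧ B \ A = H := by
    intro H
    by_cases hH : H ∈ T
    · obtain ⟨⟨B, hB, e⟩, -⟩ := mem_contraction.1 (hT hH)
      exact ⟨B, fun _ => ⟨hB, e⟩⟩
    · exact ⟨∅, fun h => absurd h hH⟩
  choose l hl using hlift
  obtain ⟨F, hF, hF'⟩ := h (T.image l) (by
    intro B hB
    obtain ⟨H, hH, rfl⟩ := Finset.mem_image.1 hB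
    exact (hl H hH).1) (hTne.image l)
  obtain ⟨H0, hH0, rfl⟩ := Finset.mem_image.1 hF
  refine ⟨H0, hH0, ?_⟩
  have inj : ∀ H ∈ T, l H = l H0 → H = H0 := by
    intro H hH e
    rw [← (hl H hH).2, e, (hl H0 hH0).2]
  rcases hF' with h1 | ⟨J, hJ, hJF, hJ'⟩
  · left
    intro H hH
    exact inj H hH (h1 _ (Finset.mem_image_of_mem l hH))
  · right
    obtain ⟨G, hG, rfl⟩ := Finset.mem_image.1 hJ
    refine ⟨G, hG, fun e => hJF (by rw [e]), ?_⟩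
    intro H hH hne v hv
    have hh := hJ' (l H) (Finset.mem_image_of_mem l hH) (fun e => hne (inj H hH e))
    have := @hh v
    have e1 := (hl H hH).2
    have e2 := (hl H0 hH0).2
    have e3 := (hl G hG).2
    rw [← e1, ← e2] at hv
    rw [← e3, ← e2]
    simp at hv this ⊢
    tauto
section GeneralRegular

variable {R : Type*} [CommRing R]

open RingTheory.Sequence Pointwise

theorem smul_top_quot_eq (I : Ideal R) (r : R) :
    (r • (⊤ : Submodule R (R ⧸ I))) = Submodule.map (Submodule.mkQ I) (Ideal.span {r}) := by
  rw [← Submodule.ideal_span_singleton_smul]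
  have : (Ideal.span {r} : Submodule R R) = Ideal.span {r} • (⊤ : Submodule R R) := by simp
  conv_rhs => rw [this]
  rw [Submodule.map_smul'', Submodule.map_top, Submodule.range_mkQ]

/-- Quotienting `R/I` further by `r`. -/
noncomputable def quotSMulTopEquivSup (I : Ideal R) (r : R) :
    QuotSMulTop r (R ⧸ I) ≃ₗ[R] R ⧸ (I ⊔ Ideal.span {r}) :=
  (Submodule.quotEquivOfEq _ _ (smul_top_quot_eq I r)).trans
    (Submodule.quotientQuotientEquivQuotientSup I (Ideal.span {r}))

theorem isSMulRegular_quot_iff (I : Ideal R) (r : R) :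
    IsSMulRegular (R ⧸ I) r ↔ ∀ f, f * r ∈ I → f ∈ I := by
  rw [isSMulRegular_iff_right_eq_zero_of_smul]
  constructor
  · intro h f hf
    rw [← Ideal.Quotient.eq_zero_iff_mem]
    apply h
    rw [← Ideal.Quotient.eq_zero_iff_mem] at hf
    rw [Algebra.smul_def, Ideal.Quotient.algebraMap_eq, ← map_mul, mul_comm]
    exact hf
  · intro h x hx
    obtain ⟨f, rfl⟩ := Ideal.Quotient.mk_surjective x
    rw [Algebra.smul_def, Ideal.Quotient.algebraMap_eq, ← map_mul, mul_comm] at hx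
    rw [Ideal.Quotient.eq_zero_iff_mem] at hx ⊢
    exact h f hx

theorem weaklyRegular_quot_cons_iff (I : Ideal R) (r : R) (rs : List R) :
    IsWeaklyRegular (R ⧸ I) (r :: rs) ↔
      (∀ f, f * r ∈ I → f ∈ I) ∧ IsWeaklyRegular (R ⧸ (I ⊔ Ideal.span {r})) rs := by
  rw [isWeaklyRegular_cons_iff, isSMulRegular_quot_iff,
    (quotSMulTopEquivSup I r).isWeaklyRegular_congr]

theorem dim_add_length_le (rs : List R) : ∀ I : Ideal R, IsWeaklyRegular (R ⧸ I) rs →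
    ringKrullDim (R ⧸ (I ⊔ Ideal.ofList rs)) + (rs.length : WithBot ℕ∞) ≤
      ringKrullDim (R ⧸ I) := by
  induction rs with
  | nil =>
    intro I _
    have e : I ⊔ Ideal.ofList ([] : List R) = I := by rw [Ideal.ofList_nil, sup_bot_eq]
    simp only [List.length_nil, Nat.cast_zero, add_zero]
    exact (ringKrullDim_eq_of_ringEquiv (Ideal.quotEquivOfEq e)).le
  | cons r rs ih =>
    intro I h
    rw [weaklyRegular_quot_cons_iff] at h
    have h1 := ih _ h.2
    have h2 : ringKrullDim (R ⧸ (I ⊔ Ideal.span {r})) + 1 ≤ ringKrullDim (R ⧸ I) := by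
      have hr : Ideal.Quotient.mk I r ∈ nonZeroDivisors (R ⧸ I) := by
        rw [mem_nonZeroDivisors_iff_right]
        intro x hx
        obtain ⟨f, rfl⟩ := Ideal.Quotient.mk_surjective x
        rw [← map_mul] at hx
        rw [Ideal.Quotient.eq_zero_iff_mem] at hx ⊢
        exact h.1 f hx
      have h3 := ringKrullDim_quotient_succ_le_of_nonZeroDivisor hr
      have e := DoubleQuot.quotQuotEquivQuotSup I (Ideal.span {r})
      rw [← ringKrullDim_eq_of_ringEquiv e, Ideal.map_span, Set.image_singleton]
      exact h3
    have e : I ⊔ Ideal.ofList (r :: rs) = I ⊔ Ideal.span {r} ⊔ Ideal.ofList rs := by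
      rw [Ideal.ofList_cons, sup_assoc]
    rw [ringKrullDim_eq_of_ringEquiv (Ideal.quotEquivOfEq e), List.length_cons, Nat.cast_add,
      Nat.cast_one, ← add_assoc]
    exact (add_le_add_left h1 1).trans h2

end GeneralRegular

section MonomialPart

variable {V : Type} [Fintype V] [DecidableEq V] (K : Type) [Field K]

/-- The ideal generated by the monomials with exponents in `D`. -/
noncomputable def monIdeal (D : Set (V →₀ ℕ)) : Ideal (MvPolynomial V K) :=
  Ideal.span ((fun s => monomial s (1 : K)) '' D)

theorem mem_monIdeal {D : Set (V →₀ ℕ)} {f : MvPolynomial V K} :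
    f ∈ monIdeal K D ↔ ∀ m ∈ f.support, ∃ d ∈ D, d ≤ m :=
  mem_ideal_span_monomial_image

theorem sub_regular (D : Set (V →₀ ℕ)) (u w : V) (huw : u ≠ w) (t : ℕ)
    (h1 : ∀ d ∈ D, d u ≤ 1) (h2 : ∀ d ∈ D, d w ≤ t) (h3 : ∀ d ∈ D, d u = 1 → d w = t)
    (f : MvPolynomial V K) (hf : f * (X u - X w) ∈ monIdeal K D) : f ∈ monIdeal K D := by
  classical
  by_contra hcon
  rw [mem_monIdeal] at hcon hf
  push Not at hcon
  obtain ⟨m0, hm0, hm0'⟩ := hcon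
  obtain ⟨m, hm, hmax⟩ := Finset.exists_max_image
    (f.support.filter fun m => ∀ d ∈ D, ¬ d ≤ m) (fun m => m u)
    ⟨m0, Finset.mem_filter.2 ⟨hm0, hm0'⟩⟩
  obtain ⟨hms, hmD⟩ := Finset.mem_filter.1 hm
  have hco : ∀ a, coeff a (f * (X u - X w)) =
      (if u ∈ a.support then coeff (a - Finsupp.single u 1) f else 0) -
      (if w ∈ a.support then coeff (a - Finsupp.single w 1) f else 0) := by
    intro a
    rw [mul_sub, coeff_sub, coeff_mul_X', coeff_mul_X']
  have step1 : ∃ d ∈ D, d ≤ m + Finsupp.single u 1 := by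
    by_cases hc : coeff (m + Finsupp.single u 1) (f * (X u - X w)) = 0
    · rw [hco, if_pos (by simp), add_tsub_cancel_right] at hc
      have hm0 : coeff m f ≠ 0 := mem_support_iff.1 hms
      split_ifs at hc with hw
      · set m' := m + Finsupp.single u 1 - Finsupp.single w 1 with hm'
        have hm's : m' ∈ f.support := by
          rw [mem_support_iff]
          intro e
          rw [e, sub_zero] at hc
          exact hm0 hc
        by_contra hno
        push Not at hno
        have hle : m' ≤ m + Finsupp.single u 1 := tsub_le_self
        have := hmax m' (Finset.mem_filter.2 ⟨hm's, fun d hd hdm => hno d hd (hdm.trans hle)⟩)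
        have e : m' u = m u + 1 := by
          simp [hm', Finsupp.single_apply, huw.symm]
        omega
      · rw [sub_zero] at hc
        exact absurd hc hm0
    · exact hf _ (mem_support_iff.2 hc)
  obtain ⟨d, hd, hdm⟩ := step1
  have hdu : m u < d u := by
    by_contra hlt
    push Not at hlt
    apply hmD d hd
    intro v
    by_cases hv : v = u
    · subst hv; exact hlt
    · have := hdm v
      simpa [Finsupp.single_apply, Ne.symm hv] using this
  have hdu1 := h1 d hd
  have hmu : m u = 0 := by omega
  have hdw := h3 d hd (by omega)
  have hmw : t ≤ m w := by
    have := hdm w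
    simp [Finsupp.single_apply, huw] at this
    omega
  have step2 : ∃ d ∈ D, d ≤ m + Finsupp.single w 1 := by
    apply hf
    rw [mem_support_iff, hco, if_neg (by simp [hmu, Finsupp.single_apply, huw.symm]),
      if_pos (by simp), add_tsub_cancel_right, zero_sub, neg_ne_zero]
    exact mem_support_iff.1 hms
  obtain ⟨d', hd', hdm'⟩ := step2
  have hdw' := h2 d' hd'
  apply hmD d' hd'
  intro v
  by_cases hv : v = w
  · subst hv; omega
  · have := hdm' v
    simpa [Finsupp.single_apply, Ne.symm hv] using this

/-- Exponent of the image of `x_H` under the substitution `ρ`. -/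
noncomputable def expo (ρ : V → V) (H : Finset V) : V →₀ ℕ := ∑ v ∈ H, Finsupp.single (ρ v) 1

theorem expo_apply (ρ : V → V) (H : Finset V) (w : V) :
    expo ρ H w = (H.filter fun v => ρ v = w).card := by
  rw [expo, Finsupp.finsetSum_apply, Finset.card_filter]
  exact Finset.sum_congr rfl fun v _ => Finsupp.single_apply

theorem rename_xMon (ρ : V → V) (H : Finset V) :
    rename ρ (xMon K H) = monomial (expo ρ H) 1 := by
  rw [xMon, map_prod, expo, monomial_sum_one]
  exact Finset.prod_congr rfl fun v _ => by rw [rename_X]; rfl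

theorem xMon_eq (H : Finset V) : xMon K H = monomial (expo id H) 1 := by
  rw [← rename_xMon, rename_id_apply]

theorem facetIdeal_eq (S : Finset (Finset V)) :
    facetIdealOf K S = monIdeal K {d | ∃ H ∈ S, d = expo id H} := by
  rw [facetIdealOf, monIdeal]
  congr 1
  ext p
  constructor
  · rintro ⟨H, hH, rfl⟩
    exact ⟨_, ⟨H, hH, rfl⟩, (xMon_eq K H).symm⟩
  · rintro ⟨_, ⟨H, hH, rfl⟩, rfl⟩
    exact ⟨H, hH, (xMon_eq K H).symm⟩

/-- The facet ideal plus differences `x_v - x_{root v}` for `v ∈ P`. -/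
noncomputable def stageIdeal (S : Finset (Finset V)) (root : V → V) (P : Finset V) :
    Ideal (MvPolynomial V K) :=
  facetIdealOf K S ⊔ Ideal.span ((fun v => X v - X (root v)) '' (P : Set V))

theorem mem_stageIdeal_iff (S : Finset (Finset V)) (root : V → V)
    (hroot : ∀ v, root (root v) = root v) (P : Finset V) (ρ : V → V)
    (hρ : ∀ v, ρ v = if v ∈ P then root v else v) (f : MvPolynomial V K) :
    f ∈ stageIdeal K S root P ↔
      rename ρ f ∈ monIdeal K {d | ∃ H ∈ S, d = expo ρ H} := by
  have hmk : ∀ f : MvPolynomial V K, Ideal.Quotient.mk (stageIdeal K S root P) (rename ρ f) =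
      Ideal.Quotient.mk (stageIdeal K S root P) f := by
    intro f
    have : (Ideal.Quotient.mkₐ K (stageIdeal K S root P)).comp (rename ρ) =
        Ideal.Quotient.mkₐ K (stageIdeal K S root P) := by
      apply MvPolynomial.algHom_ext
      intro v
      simp only [AlgHom.comp_apply, rename_X, Ideal.Quotient.mkₐ_eq_mk]
      rw [hρ]
      split_ifs with hv
      · symm
        rw [Ideal.Quotient.eq]
        exact Ideal.mem_sup_right (Ideal.subset_span ⟨v, hv, rfl⟩)
      · rfl
    exact DFunLike.congr_fun this f
  constructor
  · have hle : stageIdeal K S root P ≤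
        Ideal.comap (rename ρ : MvPolynomial V K →ₐ[K] MvPolynomial V K)
          (monIdeal K {d | ∃ H ∈ S, d = expo ρ H}) := by
      refine sup_le (Ideal.span_le.2 ?_) (Ideal.span_le.2 ?_)
      · rintro _ ⟨H, hH, rfl⟩
        change rename ρ (xMon K H) ∈ monIdeal K {d | ∃ H ∈ S, d = expo ρ H}
        rw [rename_xMon]
        exact Ideal.subset_span ⟨_, ⟨H, hH, rfl⟩, rfl⟩
      · rintro _ ⟨v, hv, rfl⟩
        change rename ρ (X v - X (root v)) ∈ monIdeal K {d | ∃ H ∈ S, d = expo ρ H}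
        have e1 : ρ v = root v := by rw [hρ, if_pos (by simpa using hv)]
        have e2 : ρ (root v) = root v := by rw [hρ, hroot, ite_self]
        rw [map_sub, rename_X, rename_X, e1, e2, sub_self]
        exact zero_mem _
    exact fun h => hle h
  · intro h
    have hle : monIdeal K {d | ∃ H ∈ S, d = expo ρ H} ≤ stageIdeal K S root P := by
      refine Ideal.span_le.2 ?_
      rintro _ ⟨_, ⟨H, hH, rfl⟩, rfl⟩
      change monomial (expo ρ H) 1 ∈ stageIdeal K S root P
      rw [← rename_xMon, ← Ideal.Quotient.eq_zero_iff_mem, hmk, Ideal.Quotient.eq_zero_iff_mem]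
      exact Ideal.mem_sup_left (Ideal.subset_span ⟨H, hH, rfl⟩)
    rw [← Ideal.Quotient.eq_zero_iff_mem, ← hmk, Ideal.Quotient.eq_zero_iff_mem]
    exact hle h

theorem stage_regular (S : Finset (Finset V)) (root : V → V)
    (hroot : ∀ v, root (root v) = root v)
    (hrootmem : ∀ H ∈ S, ∀ v ∈ H, root v ∈ H) (L : List V) :
    ∀ P : Finset V, L.Nodup → (∀ v ∈ L, v ∉ P) → (∀ v ∈ L, root v ≠ v) →
    (∀ v ∈ L, ∀ v' ∈ P, root v' = root v → ∀ H ∈ S, v ∈ H → v' ∈ H) →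
    L.Pairwise (fun v' v => root v' = root v → ∀ H ∈ S, v ∈ H → v' ∈ H) →
    RingTheory.Sequence.IsWeaklyRegular (MvPolynomial V K ⧸ stageIdeal K S root P)
      (L.map fun v => (X v - X (root v) : MvPolynomial V K)) := by
  induction L with
  | nil => intros; simp
  | cons u L ih =>
    intro P hnd hLP hLr hPc hpw
    rw [List.map_cons, weaklyRegular_quot_cons_iff]
    have huP : u ∉ P := hLP u (by simp)
    have hur : root u ≠ u := hLr u (by simp)
    constructor
    · intro f hf
      set ρ : V → V := fun v => if v ∈ P then root v else v with hρdef
      have hρ : ∀ v, ρ v = if v ∈ P then root v else v := fun v => rfl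
      rw [mem_stageIdeal_iff K S root hroot P ρ hρ] at hf ⊢
      have e1 : ρ u = u := by rw [hρ, if_neg huP]
      have e2 : ρ (root u) = root u := by rw [hρ, hroot, ite_self]
      rw [map_mul, map_sub, rename_X, rename_X, e1, e2] at hf
      have hpre : ∀ v, ρ v = u → v = u := by
        intro v hv
        rw [hρ] at hv
        split_ifs at hv with hvP
        · exact absurd (by rw [← hv, hroot]) hur
        · exact hv
      refine sub_regular K _ u (root u) hur.symm
        ((Finset.univ.filter fun v => ρ v = root u).card) ?_ ?_ ?_ _ hf
      · rintro _ ⟨H, hH, rfl⟩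
        rw [expo_apply]
        refine Finset.card_le_one.2 ?_
        intro a ha b hb
        rw [hpre a (Finset.mem_filter.1 ha).2, hpre b (Finset.mem_filter.1 hb).2]
      · rintro _ ⟨H, hH, rfl⟩
        rw [expo_apply]
        exact Finset.card_le_card (Finset.filter_subset_filter _ (Finset.subset_univ _))
      · rintro _ ⟨H, hH, rfl⟩ h1
        rw [expo_apply] at h1 ⊢
        have huH : u ∈ H := by
          obtain ⟨a, ha⟩ := Finset.card_pos.1 (by rw [h1]; exact one_pos)
          obtain ⟨haH, ha⟩ := Finset.mem_filter.1 ha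
          rwa [hpre a ha] at haH
        congr 1
        ext v
        simp only [Finset.mem_filter, Finset.mem_univ, true_and, and_iff_right_iff_imp]
        intro hv
        rw [hρ] at hv
        split_ifs at hv with hvP
        · exact hPc u (by simp) v hvP hv H hH huH
        · rw [hv]; exact hrootmem H hH u huH
    · have e : stageIdeal K S root P ⊔ Ideal.span {X u - X (root u)} =
          stageIdeal K S root (insert u P) := by
        rw [stageIdeal, stageIdeal, Finset.coe_insert, Set.image_insert_eq, Ideal.span_insert,
          sup_assoc, sup_comm (Ideal.span {X u - X (root u)})]
      rw [e]
      rw [List.nodup_cons] at hnd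
      rw [List.pairwise_cons] at hpw
      refine ih (insert u P) hnd.2 ?_ (fun v hv => hLr v (by simp [hv])) ?_ hpw.2
      · intro v hv hv'
        rcases Finset.mem_insert.1 hv' with rfl | h
        · exact hnd.1 hv
        · exact hLP v (by simp [hv]) h
      · intro v hv v' hv'
        rcases Finset.mem_insert.1 hv' with rfl | h
        · exact hpw.1 v hv
        · exact hPc v (by simp [hv]) v' h

theorem facets_regular (L : List (Finset V)) :
    ∀ T : Finset (Finset V), L.Pairwise (fun F F' => F ∩ F' = ∅) →
    (∀ F ∈ L, ∀ F' ∈ T, F ∩ F' = ∅) →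
    RingTheory.Sequence.IsWeaklyRegular (MvPolynomial V K ⧸ facetIdealOf K T)
      (L.map fun F => xMon K F) := by
  induction L with
  | nil => intros; simp
  | cons F L ih =>
    intro T hpw hT
    rw [List.map_cons, weaklyRegular_quot_cons_iff]
    rw [List.pairwise_cons] at hpw
    constructor
    · intro f hf
      rw [facetIdeal_eq, mem_monIdeal] at hf ⊢
      intro m hm
      have hm' : m + expo id F ∈ (f * xMon K F).support := by
        rw [mem_support_iff, xMon_eq, coeff_mul_monomial, mul_one]
        exact mem_support_iff.1 hm
      obtain ⟨_, ⟨H, hH, rfl⟩, hle⟩ := hf _ hm'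
      refine ⟨_, ⟨H, hH, rfl⟩, ?_⟩
      intro v
      have := hle v
      rw [Finsupp.add_apply, expo_apply, expo_apply] at this
      rw [expo_apply]
      by_cases hv : v ∈ H
      · have hvF : v ∉ F := by
          intro hvF
          have := hT F (by simp) H hH
          exact Finset.notMem_empty v (this ▸ Finset.mem_inter.2 ⟨hvF, hv⟩)
        have e : (F.filter fun x => id x = v) = ∅ := by
          ext x; simp; rintro h rfl; exact hvF h
        rw [e] at this
        simpa using this
      · have e : (H.filter fun x => id x = v) = ∅ := by
          ext x; simp; rintro h rfl; exact hv h
        rw [e]; simp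
    · have e : facetIdealOf K T ⊔ Ideal.span {xMon K F} = facetIdealOf K (insert F T) := by
        rw [facetIdealOf, facetIdealOf, ← Ideal.span_union]
        congr 1
        ext p
        simp only [Set.mem_union, Set.mem_ofPred_eq, Set.mem_singleton_iff, Finset.mem_insert]
        constructor
        · rintro (⟨H, hH, rfl⟩ | rfl)
          · exact ⟨H, Or.inr hH, rfl⟩
          · exact ⟨F, Or.inl rfl, rfl⟩
        · rintro ⟨H, rfl | hH, rfl⟩
          · exact Or.inr rfl
          · exact Or.inl ⟨H, hH, rfl⟩
      rw [e]
      refine ih (insert F T) hpw.2 ?_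
      intro F1 hF1 F2 hF2
      rcases Finset.mem_insert.1 hF2 with rfl | h
      · rw [Finset.inter_comm]; exact hpw.1 F1 hF1
      · exact hT F1 (by simp [hF1]) F2 h

theorem facet_dim_le (S Fs : Finset (Finset V)) (hsub : Fs ⊆ S)
    (hdisj : ∀ F ∈ Fs, ∀ F' ∈ Fs, F ≠ F' → F ∩ F' = ∅) :
    ringKrullDim (MvPolynomial V K ⧸ facetIdealOf K S) + (Fs.card : WithBot ℕ∞) ≤
      (Fintype.card V : WithBot ℕ∞) := by
  have hreg := facets_regular K Fs.toList ∅ (by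
    refine List.Nodup.pairwise_of_forall_ne Fs.nodup_toList ?_
    intro F hF F' hF' hne
    exact hdisj F (Finset.mem_toList.1 hF) F' (Finset.mem_toList.1 hF') hne) (by simp)
  have h1 := dim_add_length_le _ _ hreg
  rw [List.length_map, Finset.length_toList] at h1
  have h2 : ringKrullDim (MvPolynomial V K ⧸ facetIdealOf K (∅ : Finset (Finset V))) ≤
      (Fintype.card V : WithBot ℕ∞) := by
    refine (ringKrullDim_quotient_le _).trans ?_
    rw [MvPolynomial.ringKrullDim_of_isNoetherianRing, ringKrullDim_eq_zero_of_field, zero_add,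
      Nat.card_eq_fintype_card]
  have hle : facetIdealOf K (∅ : Finset (Finset V)) ⊔
      Ideal.ofList (Fs.toList.map fun F => xMon K F) ≤ facetIdealOf K S := by
    refine sup_le (Ideal.span_le.2 ?_) (Ideal.span_le.2 ?_)
    · rintro _ ⟨H, hH, -⟩; simp at hH
    · intro p hp
      simp only [Set.mem_ofPred_eq, List.mem_map, Finset.mem_toList] at hp
      obtain ⟨F, hF, rfl⟩ := hp
      exact Ideal.subset_span ⟨F, hsub hF, rfl⟩
  have h3 := ringKrullDim_le_of_surjective (Ideal.Quotient.factor hle)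
    (Ideal.Quotient.factor_surjective hle)
  exact ((add_le_add_left h3 _).trans h1).trans h2

end MonomialPart
section FinalPart

variable {V : Type} [Fintype V] [DecidableEq V] (K : Type) [Field K]

/-- Number of facets through `v`. -/
def vdeg (S : Finset (Finset V)) (v : V) : ℕ := (S.filter fun H => v ∈ H).card

theorem NiceGraft.mem_of_vdeg {S Fs : Finset (Finset V)} (h : NiceGraft S Fs) {F : Finset V}
    (hF : F ∈ Fs) {v v' : V} (hv : v ∈ F) (hv' : v' ∈ F) (hc : vdeg S v ≤ vdeg S v')
    {H : Finset V} (hH : H ∈ S) (hvH : v ∈ H) : v' ∈ H := by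
  by_contra hno
  have : vdeg S v' < vdeg S v := by
    refine Finset.card_lt_card (Finset.ssubset_iff_subset_ne.2 ⟨?_, ?_⟩)
    · intro G hG
      obtain ⟨hGS, hvG⟩ := Finset.mem_filter.1 hG
      refine Finset.mem_filter.2 ⟨hGS, ?_⟩
      rcases h.chain F hF G hGS H hH with h1 | h1
      · exact absurd (h1 (Finset.mem_inter.2 ⟨hv', hvG⟩)) hno
      · exact h1 (Finset.mem_inter.2 ⟨hv, hvH⟩)
    · intro e
      have : H ∈ S.filter fun H => v' ∈ H := by
        rw [e]; exact Finset.mem_filter.2 ⟨hH, hvH⟩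
      exact hno (Finset.mem_filter.1 this).2
  omega

theorem NiceGraft.exists_regular {S Fs : Finset (Finset V)} (h : NiceGraft S Fs)
    (hS : S.Nonempty) :
    ∃ rs : List (MvPolynomial V K), rs.length + Fs.card = Fintype.card V ∧
      (∀ r ∈ rs, r ∈ Ideal.span (Set.range (X : V → MvPolynomial V K))) ∧
      RingTheory.Sequence.IsWeaklyRegular (MvPolynomial V K ⧸ facetIdealOf K S) rs := by
  obtain ⟨H0, hH0⟩ := hS
  obtain ⟨v0, hv0⟩ := h.nonempty H0 hH0
  obtain ⟨F0, hF0, -⟩ := h.cover H0 hH0 v0 hv0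
  have hβ : ∀ v : V, ∃ F ∈ Fs, (∃ H ∈ S, v ∈ H) → v ∈ F := by
    intro v
    by_cases hv : ∃ H ∈ S, v ∈ H
    · obtain ⟨H, hH, hvH⟩ := hv
      obtain ⟨F, hF, hvF⟩ := h.cover H hH v hvH
      exact ⟨F, hF, fun _ => hvF⟩
    · exact ⟨F0, hF0, fun h => absurd h hv⟩
  choose β hβF hβ using hβ
  have htop : ∀ F : Finset V, ∃ w : V, F ∈ Fs → w ∈ F ∧ ∀ v ∈ F, vdeg S v ≤ vdeg S w := by
    intro F
    by_cases hF : F ∈ Fs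
    · obtain ⟨w, hw, hmax⟩ := Finset.exists_max_image F (vdeg S) (h.nonempty F (h.sub hF))
      exact ⟨w, fun _ => ⟨hw, hmax⟩⟩
    · exact ⟨v0, fun h => absurd h hF⟩
  choose top htop using htop
  have hβeq : ∀ F ∈ Fs, ∀ v ∈ F, β v = F := by
    intro F hF v hv
    by_contra hne
    have := h.disj _ (hβF v) F hF hne
    have hvb : v ∈ β v := hβ v ⟨F, h.sub hF, hv⟩
    exact Finset.notMem_empty v (this ▸ Finset.mem_inter.2 ⟨hvb, hv⟩)
  have hβtop : ∀ F ∈ Fs, β (top F) = F := fun F hF => hβeq F hF _ (htop F hF).1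
  set root : V → V := fun v => top (β v) with hrootdef
  have hroot : ∀ v, root (root v) = root v := by
    intro v
    simp only [hrootdef]
    rw [hβtop _ (hβF v)]
  have hrootmem : ∀ H ∈ S, ∀ v ∈ H, root v ∈ H := by
    intro H hH v hv
    have hvb : v ∈ β v := hβ v ⟨H, hH, hv⟩
    exact h.mem_of_vdeg (hβF v) hvb (htop _ (hβF v)).1 ((htop _ (hβF v)).2 v hvb) hH hv
  have hcond : ∀ v' v, vdeg S v ≤ vdeg S v' → root v' = root v → ∀ H ∈ S, v ∈ H → v' ∈ H := by
    intro v' v hc hr H hH hv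
    have hvb : v ∈ β v := hβ v ⟨H, hH, hv⟩
    have hpos : 0 < vdeg S v := Finset.card_pos.2 ⟨H, Finset.mem_filter.2 ⟨hH, hv⟩⟩
    obtain ⟨H', hH'⟩ := Finset.card_pos.1 (lt_of_lt_of_le hpos hc)
    obtain ⟨hH'S, hv'H'⟩ := Finset.mem_filter.1 hH'
    have hvb' : v' ∈ β v' := hβ v' ⟨H', hH'S, hv'H'⟩
    have e : β v' = β v := by
      rw [← hβtop _ (hβF v'), ← hβtop _ (hβF v)]
      exact congrArg β hr
    exact h.mem_of_vdeg (hβF v) hvb (e ▸ hvb') hc hH hv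
  set N : Finset V := Finset.univ.filter fun v => root v ≠ v with hN
  set L : List V := N.toList.mergeSort (fun a b => decide (vdeg S b ≤ vdeg S a)) with hL
  have hperm : L.Perm N.toList := List.mergeSort_perm _ _
  have hLmem : ∀ v, v ∈ L ↔ root v ≠ v := by
    intro v
    rw [hperm.mem_iff, Finset.mem_toList, hN]
    simp
  have hcard : N.card + Fs.card = Fintype.card V := by
    have e : Fs.card = (Finset.univ.filter fun v => ¬ (root v ≠ v)).card := by
      refine Finset.card_bij (fun F _ => top F) ?_ ?_ ?_
      · intro F hF
        simp only [Finset.mem_filter, Finset.mem_univ, true_and, not_not, hrootdef]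
        rw [hβtop F hF]
      · intro F hF F' hF' e
        rw [← hβtop F hF, ← hβtop F' hF', e]
      · intro v hv
        simp only [Finset.mem_filter, Finset.mem_univ, true_and, not_not] at hv
        exact ⟨β v, hβF v, hv⟩
    rw [e, hN, Finset.card_filter_add_card_filter_not, Finset.card_univ]
  refine ⟨L.map fun v => (X v - X (root v) : MvPolynomial V K), ?_, ?_, ?_⟩
  · rw [List.length_map, hperm.length_eq, Finset.length_toList, hcard]
  · intro r hr
    obtain ⟨v, -, rfl⟩ := List.mem_map.1 hr
    exact sub_mem (Ideal.subset_span ⟨v, rfl⟩) (Ideal.subset_span ⟨root v, rfl⟩)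
  · have hst := stage_regular K S root hroot hrootmem L ∅ (hperm.nodup_iff.2 N.nodup_toList)
      (by simp) (fun v hv => (hLmem v).1 hv) (by simp) (by
        have hs := List.pairwise_mergeSort (le := fun a b => decide (vdeg S b ≤ vdeg S a))
          (by intro a b c; simp only [decide_eq_true_eq]; omega)
          (by intro a b; simp only [Bool.or_eq_true, decide_eq_true_eq]; omega) N.toList
        refine hs.imp ?_
        intro a b hab
        exact hcond a b (by simpa using hab))
    have e : stageIdeal K S root ∅ = facetIdealOf K S := by simp [stageIdeal]
    rw [e] at hst
    exact hst

theorem facetIdeal_le_max {S : Finset (Finset V)} (hne : ∀ H ∈ S, H.Nonempty) :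
    facetIdealOf K S ≤ Ideal.span (Set.range (X : V → MvPolynomial V K)) := by
  refine Ideal.span_le.2 ?_
  rintro _ ⟨H, hH, rfl⟩
  obtain ⟨v, hv⟩ := hne H hH
  change xMon K H ∈ Ideal.span (Set.range (X : V → MvPolynomial V K))
  rw [xMon, ← Finset.mul_prod_erase H _ hv]
  exact Ideal.mul_mem_right _ _ (Ideal.subset_span ⟨v, rfl⟩)

theorem varIdeal_ne_top : Ideal.span (Set.range (X : V → MvPolynomial V K)) ≠ ⊤ := by
  have hle : Ideal.span (Set.range (X : V → MvPolynomial V K)) ≤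
      RingHom.ker (constantCoeff (R := K) (σ := V)) := by
    refine Ideal.span_le.2 ?_
    rintro _ ⟨v, rfl⟩
    simp
  intro e
  rw [e] at hle
  have : (1 : MvPolynomial V K) ∈ RingHom.ker (constantCoeff (R := K) (σ := V)) := hle trivial
  simp at this

theorem regular_length_le (I : Ideal (MvPolynomial V K)) (rs : List (MvPolynomial V K))
    (hI : I ≤ Ideal.span (Set.range (X : V → MvPolynomial V K)))
    (hrs : ∀ r ∈ rs, r ∈ Ideal.span (Set.range (X : V → MvPolynomial V K)))
    (hreg : RingTheory.Sequence.IsWeaklyRegular (MvPolynomial V K ⧸ I) rs) :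
    (rs.length : WithBot ℕ∞) ≤ ringKrullDim (MvPolynomial V K ⧸ I) := by
  refine le_trans ?_ (dim_add_length_le rs I hreg)
  have hle : I ⊔ Ideal.ofList rs ≤ Ideal.span (Set.range (X : V → MvPolynomial V K)) :=
    sup_le hI (Ideal.span_le.2 fun r hr => hrs r hr)
  have hnt : Nontrivial (MvPolynomial V K ⧸ (I ⊔ Ideal.ofList rs)) := by
    rw [Ideal.Quotient.nontrivial_iff]
    intro e
    rw [e] at hle
    exact varIdeal_ne_top K (top_le_iff.1 hle)
  have := ringKrullDim_nonneg_of_nontrivial (R := MvPolynomial V K ⧸ (I ⊔ Ideal.ofList rs))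
  simpa using add_le_add_left this (rs.length : WithBot ℕ∞)

theorem regular_of_weakly (I : Ideal (MvPolynomial V K)) (rs : List (MvPolynomial V K))
    (hI : I ≤ Ideal.span (Set.range (X : V → MvPolynomial V K)))
    (hrs : ∀ r ∈ rs, r ∈ Ideal.span (Set.range (X : V → MvPolynomial V K)))
    (hreg : RingTheory.Sequence.IsWeaklyRegular (MvPolynomial V K ⧸ I) rs) :
    RingTheory.Sequence.IsRegular (MvPolynomial V K ⧸ I) rs := by
  refine ⟨hreg, ?_⟩
  intro e
  set m := Ideal.span (Set.range (X : V → MvPolynomial V K)) with hm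
  have h1 : Ideal.ofList rs • (⊤ : Submodule (MvPolynomial V K) (MvPolynomial V K ⧸ I)) ≤
      Submodule.map (Submodule.mkQ I) m := by
    have hle : Ideal.ofList rs ≤ m := Ideal.span_le.2 fun r hr => hrs r hr
    have hmm : (m : Submodule (MvPolynomial V K) (MvPolynomial V K)) =
        m • (⊤ : Submodule (MvPolynomial V K) (MvPolynomial V K)) := by simp
    rw [hmm, Submodule.map_smul'', Submodule.map_top, Submodule.range_mkQ]
    exact Submodule.smul_mono_left hle
  rw [← e] at h1
  have h2 : Submodule.mkQ I (1 : MvPolynomial V K) ∈ Submodule.map (Submodule.mkQ I) m :=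
    h1 trivial
  obtain ⟨y, hy, hy'⟩ := h2
  have h3 : y - 1 ∈ I := (Submodule.Quotient.eq I).1 hy'
  apply varIdeal_ne_top K (V := V)
  rw [← hm, Ideal.eq_top_iff_one]
  have : y - (y - 1) ∈ m := sub_mem hy (hI h3)
  simpa using this

theorem NiceGraft.isCM {S Fs : Finset (Finset V)} (h : NiceGraft S Fs) (hS : S.Nonempty) :
    IsCMQuot K (facetIdealOf K S) := by
  obtain ⟨rs, hlen, hrs, hreg⟩ := h.exists_regular K hS
  have hI := facetIdeal_le_max K h.nonempty
  have hlow := regular_length_le K _ rs hI hrs hreg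
  have hup := facet_dim_le K S Fs h.sub h.disj
  have hdim : ringKrullDim (MvPolynomial V K ⧸ facetIdealOf K S) = (rs.length : WithBot ℕ∞) := by
    refine le_antisymm ?_ hlow
    rw [← hlen] at hup
    push_cast at hup
    generalize ringKrullDim (MvPolynomial V K ⧸ facetIdealOf K S) = d at hup hlow
    induction d using WithBot.recBotCoe with
    | bot => exact bot_le
    | coe d =>
      have hup' : d + (Fs.card : ℕ∞) ≤ (rs.length : ℕ∞) + (Fs.card : ℕ∞) := by
        exact_mod_cast hup
      have : d ≤ (rs.length : ℕ∞) :=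
        (ENat.add_le_add_iff_right (ENat.natCast_ne_top _)).1 hup'
      exact_mod_cast this
  have hdepth : gradedDepth K (facetIdealOf K S) = rs.length := by
    have hbd : ∀ n ∈ {n | ∃ rs : List (MvPolynomial V K), rs.length = n ∧
        (∀ r ∈ rs, r ∈ Ideal.span (Set.range (X : V → MvPolynomial V K))) ∧
        RingTheory.Sequence.IsRegular (MvPolynomial V K ⧸ facetIdealOf K S) rs},
        n ≤ rs.length := by
      rintro n ⟨rs', rfl, hrs', hreg'⟩
      have := regular_length_le K _ rs' hI hrs' hreg'.toIsWeaklyRegular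
      rw [hdim] at this
      exact_mod_cast this
    refine le_antisymm (csSup_le' hbd) (le_csSup ⟨_, hbd⟩ ?_)
    exact ⟨rs, rfl, hrs, regular_of_weakly K _ rs hI hrs hreg⟩
  rw [IsCMQuot, hdim, hdepth]
  rfl

end FinalPart

section Statements

variable {V : Type} [Fintype V] [DecidableEq V] (K : Type) [Field K]

theorem stmt12 (Δ : SimplicialComplexOn V)
    (hcov : ∀ v : V, ∃ F ∈ Δ.facets, v ∈ F)
    (Fs Gs : Finset (Finset V))
    (hforest : HasLeafProp Δ.facets)
    (hdecomp : IsGraftingDecomp Δ.facets Fs Gs)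
    (F : Finset V) (hFmem : F ∈ Fs)
    (hmeet : ∃ G ∈ Gs, (F ∩ G).Nonempty)
    (A : Finset V)
    (hA : ∀ a ∈ A, ∀ G ∈ Gs, (F ∩ G).Nonempty → a ∈ F ∩ G) :
    IsCMForestFacets (contraction Δ.facets A) ∧
      IsCMQuot K (facetIdealOf K (contraction Δ.facets A)) := by
  have hnice := niceGraft_of_decomp Δ.nonempty_facet Δ.antichain hdecomp
  have hne : ∀ H ∈ Δ.facets, (H \ A).Nonempty := by
    intro H hH
    rw [Finset.sdiff_nonempty]
    intro hHA
    obtain ⟨G, hG, hFG⟩ := hmeet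
    have hAFG : A ⊆ F ∩ G := fun a ha => hA a ha G hG hFG
    have hFS : F ∈ Δ.facets := hnice.sub hFmem
    have hGS : G ∈ Δ.facets := by
      rw [hdecomp.1]; exact Finset.mem_union_right _ hG
    have e1 : H = F := Δ.antichain H hH F hFS ((hHA.trans hAFG).trans Finset.inter_subset_left)
    have e2 : H = G := Δ.antichain H hH G hGS ((hHA.trans hAFG).trans Finset.inter_subset_right)
    have e3 : F = G := e1.symm.trans e2
    exact Finset.disjoint_left.1 hdecomp.2.1 hFmem (e3 ▸ hG)
  have hc := hnice.contraction A hne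
  obtain ⟨H, hH, -⟩ := exists_contraction_le A (hnice.sub hFmem)
  exact ⟨⟨hforest.contraction A, hc.isGrafted⟩, hc.isCM K ⟨H, hH⟩⟩

end Statements
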